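/- Let G = (V, c) be an infinite, connected weighted graph with a finite exhaustion (V_n), and let x, y ∈ V with x ≠ y. Then lim_{n→∞} P^n_x[τ_y < τ_x⁺] = P_x[τ_y < τ_x⁺] holds if and only if lim_{n→∞} P̄^n_x[τ_{V_n*} < τ_y < τ_x⁺] = 0. -/

import Mathlib

/-!
Write `A = V_n` and `κ = (c_n)_x / c_x`. The proof rests on the identity
`κ * Pⁿ_x[τ_y < τ_x⁺] = P_x[τ_y < τ_x⁺ inside A] + P̄ⁿ_x[τ_{A*} < τ_y < τ_x⁺]`
(`WeightedGraph.ratio_mul_escape`), valid as soon as `x, y ∈ A`.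

The left-hand side is `P̄ⁿ_x[τ_y < τ_x⁺]`. Indeed, erasing the excursions `(v, v̄, v)` from the
extended walk gives the induced walk, so both walks have the same probability to hit `y` before `x`
from every vertex of the graph (`WeightedGraph.hitProb_extTrans`). The only loss occurs in the
first step, because a step from `x` to `x̄` forces a return to `x`; this is the factor `κ`
(`WeightedGraph.escape_extTrans`). The equality of hitting probabilities is proved by first step
analysis: `hitProb` is the least nonnegative supersolution of a Dirichlet problem (`hitProb_eq`,
`hitProb_le`), and each of the two hitting probabilities yields a supersolution of the other
problem. On the other hand, `P̄ⁿ_x[τ_y < τ_x⁺]` splits according to whether `A*` is visited before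
`y`, and until it visits `A*` the extended walk moves like the walk on the whole graph
(`WeightedGraph.escape_inside`).

As `n → ∞`, `κ → 1`, while `P_x[τ_y < τ_x⁺ inside V_n]` increases to `P_x[τ_y < τ_x⁺]` since a path
to `y` visits finitely many vertices. Hence `Pⁿ_x[τ_y < τ_x⁺]` has the limit `P_x[τ_y < τ_x⁺]` iff
the last term of the identity vanishes in the limit.

Events are related to `hitProb` through the cylinder probabilities
(`IsRandomWalk.measure_hitEvent`).
-/

open MeasureTheory Filter Topology Classical
open scoped ENNReal

noncomputable section

/-- A weighted graph on an (at most countable) vertex set `V`. -/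
structure WeightedGraph (V : Type) where
  c : V → V → ℝ
  nonneg : ∀ x y, 0 ≤ c x y
  symm : ∀ x y, c x y = c y x
  loopless : ∀ x, c x x = 0
  row_summable : ∀ x, Summable (c x)

namespace WeightedGraph

variable {V : Type}

/-- adjacency: positive weight -/
def Adj (G : WeightedGraph V) (x y : V) : Prop := 0 < G.c x y

/-- connectivity of a weighted graph -/
def Connected (G : WeightedGraph V) : Prop :=
  ∀ x y : V, Relation.ReflTransGen G.Adj x y

/-- `c_x`, the total weight at `x` -/
def deg (G : WeightedGraph V) (x : V) : ℝ := ∑' y, G.c x y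

/-- `p(x,y) = c(x,y)/c_x`, the transition matrix of the random walk on `G` -/
def trans (G : WeightedGraph V) (x y : V) : ℝ := G.c x y / G.deg x

/-- `G` is a subgraph of an infinite line -/
def IsSubgraphOfLine (G : WeightedGraph V) : Prop :=
  ∃ f : V → ℤ, Function.Injective f ∧ ∀ x y : V, 0 < G.c x y → |f x - f y| = 1

/-- weights of the induced subgraph on a finite vertex set `A` -/
def restrictW (G : WeightedGraph V) (A : Finset V) (x y : V) : ℝ :=
  if x ∈ A ∧ y ∈ A then G.c x y else 0

/-- `(c_n)_x`, the degree inside `A` -/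
def degIn (G : WeightedGraph V) (A : Finset V) (x : V) : ℝ := ∑ y ∈ A, G.c x y

/-- `p_n`, transition matrix of the induced walk (zero outside of `A`) -/
def transIn (G : WeightedGraph V) (A : Finset V) (x y : V) : ℝ :=
  restrictW G A x y / degIn G A x

/-- the inner boundary `∂ᵢA` -/
def innerBoundary (G : WeightedGraph V) (A : Finset V) : Set V :=
  {v | v ∈ A ∧ ∃ w, w ∉ A ∧ 0 < G.c v w}

/-- weights `c̄ₙ` of the extended graph `Ḡₙ`, realized on `V ⊕ V` where `Sum.inr v`
plays the role of the boundary copy `v̄`. -/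
def extW (G : WeightedGraph V) (A : Finset V) : V ⊕ V → V ⊕ V → ℝ
  | Sum.inl x, Sum.inl y => if x ∈ A ∧ y ∈ A then G.c x y else 0
  | Sum.inl v, Sum.inr w => if v = w ∧ v ∈ A then ∑' z, (if z ∈ A then 0 else G.c v z) else 0
  | Sum.inr w, Sum.inl v => if v = w ∧ v ∈ A then ∑' z, (if z ∈ A then 0 else G.c v z) else 0
  | Sum.inr _, Sum.inr _ => 0

/-- `(c̄ₙ)_s` -/
def extDeg (G : WeightedGraph V) (A : Finset V) (s : V ⊕ V) : ℝ := ∑' t, extW G A s t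

/-- `p̄ₙ`, the transition matrix of the random walk on the extended graph -/
def extTrans (G : WeightedGraph V) (A : Finset V) (s t : V ⊕ V) : ℝ :=
  extW G A s t / extDeg G A s

/-- the set `Vₙ* = V̄ₙ ∖ Vₙ` of boundary copies, as a subset of `V ⊕ V` -/
def boundaryCopies (G : WeightedGraph V) (A : Finset V) : Set (V ⊕ V) :=
  {s | ∃ v ∈ innerBoundary G A, s = Sum.inr v}

/-- a finite exhaustion whose induced subgraphs are connected -/
def IsExhaustion (G : WeightedGraph V) (Vn : ℕ → Finset V) : Prop :=
  (∀ n, Vn n ⊆ Vn (n + 1)) ∧ (∀ x : V, ∃ n, x ∈ Vn n) ∧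
    ∀ n, ∀ x ∈ Vn n, ∀ y ∈ Vn n,
      Relation.ReflTransGen (fun a b => a ∈ Vn n ∧ b ∈ Vn n ∧ 0 < G.c a b) x y

end WeightedGraph

/-- the first hitting time `τ_A` of a set `A` (`⊤` if `A` is never visited) -/
def hitTime {S : Type} (A : Set S) (ω : ℕ → S) : ℕ∞ :=
  sInf {n : ℕ∞ | ∃ k : ℕ, (k : ℕ∞) = n ∧ ω k ∈ A}

/-- the hitting time `τ_A⁺` of a set `A` after time zero -/
def hitTime1 {S : Type} (A : Set S) (ω : ℕ → S) : ℕ∞ :=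
  sInf {n : ℕ∞ | ∃ k : ℕ, 1 ≤ k ∧ (k : ℕ∞) = n ∧ ω k ∈ A}

/-- the product σ-algebra `(2^S)^{⊗ℕ}` on the trajectory space `S^{ℕ₀}` -/
def trajMS (S : Type) : MeasurableSpace (ℕ → S) :=
  @MeasurableSpace.pi ℕ (fun _ => S) (fun _ => ⊤)

/-- measures on the trajectory space -/
abbrev TrajMeasure (S : Type) := @MeasureTheory.Measure (ℕ → S) (trajMS S)

/-- `μ` is (the law of) the Markov chain with transition matrix `p` and initial
distribution `δ_x`: a probability measure with the prescribed cylinder probabilities. -/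
def IsRandomWalk {S : Type} (p : S → S → ℝ) (x : S) (μ : TrajMeasure S) : Prop :=
  μ Set.univ = 1 ∧
    ∀ (n : ℕ) (f : ℕ → S),
      μ {ω | ∀ k ≤ n, ω k = f k} =
        (if f 0 = x then 1 else 0) *
          ∏ k ∈ Finset.range n, ENNReal.ofReal (p (f k) (f (k + 1)))

/-- the family of walks `P` is recurrent: `P_x[τ_x⁺ < ∞] = 1` for every start `x` -/
def IsRecurrentFamily {V : Type} (P : V → TrajMeasure V) : Prop :=
  ∀ x : V, P x {ω | hitTime1 {x} ω < ⊤} = 1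

/-- `l` is a path `x → y` with respect to the weight function `w`: it starts at `x`,
ends at `y`, has positive weights along all of its steps, and avoids `x` and `y`
in its interior. -/
def IsPathBetween {S : Type} (w : S → S → ℝ) (x y : S) (l : List S) : Prop :=
  2 ≤ l.length ∧ l.head? = some x ∧ l.getLast? = some y ∧
    l.Chain' (fun a b => 0 < w a b) ∧
    ∀ (i : ℕ) (h : i < l.length), 0 < i → i + 1 < l.length →
      l.get ⟨i, h⟩ ≠ x ∧ l.get ⟨i, h⟩ ≠ y

/-- the probability of a finite path: the product of the transition probabilities
along its steps -/
def pathProb {S : Type} (p : S → S → ℝ) (l : List S) : ℝ≥0∞ :=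
  ENNReal.ofReal (((l.zip l.tail).map fun q => p q.1 q.2).prod)

/-- the projection `π` which removes all steps of the form `(v̄, v)`, i.e. collapses
every excursion `(v, v̄, v)` to a boundary copy to the single vertex `v` -/
def projPath {V : Type} (l : List (V ⊕ V)) : List V :=
  List.destutter (· ≠ ·) (l.filterMap Sum.getLeft?)

end

/-! ### Hitting probabilities of Markov chains -/

section HittingProbabilities

/-- The probability that the chain with transition matrix `p` started at `s` is at `y` at time
`k`, all its positions before time `k` being in `D`. -/
noncomputable def firstHit {S : Type} (p : S → S → ℝ) (D : Set S) (y : S) : ℕ → S → ℝ≥0∞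
  | 0, s => if s = y then 1 else 0
  | k + 1, s => if s ∈ D then ∑' t, ENNReal.ofReal (p s t) * firstHit p D y k t else 0

/-- For `y ∉ D`, the probability that the chain with transition matrix `p` started at `s` hits
`y` and stays in `D` before doing so. -/
noncomputable def hitProb {S : Type} (p : S → S → ℝ) (D : Set S) (y s : S) : ℝ≥0∞ :=
  ∑' k, firstHit p D y k s

/-- The event that the trajectory starts at `x`, visits `y` at some time `≥ 1`, and stays in `D`
strictly between time `0` and that visit. -/
def hitEvent {S : Type} (D : Set S) (x y : S) : Set (ℕ → S) :=
  {ω | ω 0 = x ∧ ∃ k, (∀ i < k, ω (i + 1) ∈ D) ∧ ω (k + 1) = y}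

variable {S : Type}

/-- First step analysis: `hitProb` solves the Dirichlet problem on `D`. -/
lemma hitProb_eq (p : S → S → ℝ) (D : Set S) (y s : S) :
    hitProb p D y s = (if s = y then 1 else 0) +
      (if s ∈ D then ∑' t, ENNReal.ofReal (p s t) * hitProb p D y t else 0) := by
  unfold hitProb
  rw [tsum_eq_zero_add' ENNReal.summable]
  congr 1
  by_cases h : s ∈ D
  · simp only [firstHit, h, if_true]
    rw [ENNReal.tsum_comm]
    simp_rw [ENNReal.tsum_mul_left]
  · simp [firstHit, h]

lemma hitProb_of_mem {p : S → S → ℝ} {D : Set S} {y s : S} (hs : s ∈ D) (hy : s ≠ y) :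
    hitProb p D y s = ∑' t, ENNReal.ofReal (p s t) * hitProb p D y t := by
  rw [hitProb_eq]; simp [hs, hy]

lemma hitProb_of_notMem {p : S → S → ℝ} {D : Set S} {y s : S} (hs : s ∉ D) (hy : s ≠ y) :
    hitProb p D y s = 0 := by
  rw [hitProb_eq]; simp [hs, hy]

/-- Minimality: `hitProb` lies below every nonnegative supersolution of its Dirichlet problem. -/
lemma hitProb_le {p : S → S → ℝ} {D : Set S} {y : S} {g : S → ℝ≥0∞} (hy : 1 ≤ g y)
    (hy' : y ∉ D) (hg : ∀ s ∈ D, ∑' t, ENNReal.ofReal (p s t) * g t ≤ g s) (s : S) :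
    hitProb p D y s ≤ g s := by
  refine ENNReal.tsum_le_of_sum_range_le fun N => ?_
  induction N generalizing s with
  | zero => simp
  | succ N ih =>
    rw [Finset.sum_range_succ']
    by_cases hs : s ∈ D
    · have hsy : s ≠ y := fun h => hy' (h ▸ hs)
      simp only [firstHit, hs, hsy, if_true, if_false, add_zero]
      rw [← Summable.tsum_finsetSum (fun _ _ => ENNReal.summable)]
      simp_rw [← Finset.mul_sum]
      exact (ENNReal.tsum_le_tsum fun t => mul_le_mul_right (ih t) _).trans (hg s hs)
    · by_cases hsy : s = y
      · subst hsy
        simpa [firstHit, hs] using hy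
      · simp [firstHit, hs, hsy]

attribute [local instance] trajMS

lemma measurableSet_coord (i : ℕ) (A : Set S) : MeasurableSet {ω : ℕ → S | ω i ∈ A} := by
  let _ : MeasurableSpace S := ⊤
  exact measurable_pi_apply (X := fun _ : ℕ => S) i (MeasurableSpace.measurableSet_top (s := A))

lemma measurableSet_hitAt (D : Set S) (y : S) (m k : ℕ) :
    MeasurableSet {ω : ℕ → S | (∀ i < k, ω (m + i) ∈ D) ∧ ω (m + k) = y} := by
  have : {ω : ℕ → S | (∀ i < k, ω (m + i) ∈ D) ∧ ω (m + k) = y} =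
      (⋂ i, ⋂ (_ : i < k), {ω : ℕ → S | ω (m + i) ∈ D}) ∩
        {ω : ℕ → S | ω (m + k) ∈ ({y} : Set S)} := by
    ext ω; simp
  rw [this]
  exact (MeasurableSet.iInter fun i => MeasurableSet.iInter fun _ => measurableSet_coord _ _).inter
    (measurableSet_coord _ _)

lemma measurableSet_cylinder (f : ℕ → S) (m : ℕ) :
    MeasurableSet {ω : ℕ → S | ∀ i ≤ m, ω i = f i} := by
  simp only [Set.ofPred_forall]
  exact MeasurableSet.iInter fun i => MeasurableSet.iInter fun _ => measurableSet_coord i {f i}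

lemma measurableSet_hitEvent (D : Set S) (x y : S) : MeasurableSet (hitEvent D x y) := by
  have : hitEvent D x y = {ω : ℕ → S | ω 0 ∈ ({x} : Set S)} ∩
      ⋃ k, {ω : ℕ → S | (∀ i < k, ω (1 + i) ∈ D) ∧ ω (1 + k) = y} := by
    ext ω; simp [hitEvent, add_comm]
  rw [this]
  exact (measurableSet_coord _ _).inter
    (MeasurableSet.iUnion fun k => measurableSet_hitAt D y 1 k)

variable [Countable S]

/-- The Markov property at time `m`, for the event that the shifted trajectory is at `y` at time
`k` and in `D` before. -/
lemma IsRandomWalk.measure_cylinder_inter {p : S → S → ℝ} {x : S} {μ : TrajMeasure S}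
    (h : IsRandomWalk p x μ) (D : Set S) (y : S) (k : ℕ) (m : ℕ) (f : ℕ → S) :
    μ ({ω | ∀ i ≤ m, ω i = f i} ∩ {ω | (∀ i < k, ω (m + i) ∈ D) ∧ ω (m + k) = y}) =
      μ {ω | ∀ i ≤ m, ω i = f i} * firstHit p D y k (f m) := by
  induction k generalizing m f with
  | zero =>
    by_cases hy : f m = y
    · simp only [firstHit, hy, if_true, mul_one]
      congr 1
      ext ω
      simp only [Set.mem_inter_iff, Set.mem_ofPred_eq]
      constructor
      · exact fun h => h.1
      · exact fun h => ⟨h, by simp, by simpa [hy] using h m le_rfl⟩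
    · simp only [firstHit, hy, if_false, mul_zero]
      convert measure_empty (μ := μ)
      ext ω
      simp only [Set.mem_inter_iff, Set.mem_ofPred_eq, Set.mem_empty_iff_false, iff_false]
      rintro ⟨h1, -, h2⟩
      exact hy ((h1 m le_rfl).symm.trans h2)
  | succ k ih =>
    by_cases hD : f m ∈ D
    · simp only [firstHit, hD, if_true]
      -- Split according to the position `t` at time `m + 1`.
      have hset : ({ω : ℕ → S | ∀ i ≤ m, ω i = f i} ∩
          {ω | (∀ i < k + 1, ω (m + i) ∈ D) ∧ ω (m + (k + 1)) = y}) =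
          ⋃ t : S, ({ω | ∀ i ≤ m + 1, ω i = Function.update f (m + 1) t i} ∩
            {ω | (∀ i < k, ω (m + 1 + i) ∈ D) ∧ ω (m + 1 + k) = y}) := by
        ext ω
        simp only [Set.mem_inter_iff, Set.mem_ofPred_eq, Set.mem_iUnion]
        constructor
        · rintro ⟨h1, h2, h3⟩
          refine ⟨ω (m + 1), fun i hi => ?_, fun i hi => ?_, ?_⟩
          · by_cases him : i = m + 1
            · simp [him]
            · rw [Function.update_of_ne him]; exact h1 i (by omega)
          · have := h2 (i + 1) (by omega)
            rwa [show m + 1 + i = m + (i + 1) by omega]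
          · rwa [show m + 1 + k = m + (k + 1) by omega]
        · rintro ⟨t, h1, h2, h3⟩
          have h1' : ∀ i ≤ m, ω i = f i := fun i hi => by
            rw [h1 i (by omega), Function.update_of_ne (by omega)]
          refine ⟨h1', fun i hi => ?_, ?_⟩
          · rcases i with _ | i
            · rw [add_zero, h1' m le_rfl]; exact hD
            · rw [show m + (i + 1) = m + 1 + i by omega]; exact h2 i (by omega)
          · rwa [show m + (k + 1) = m + 1 + k by omega]
      rw [hset, measure_iUnion]
      · rw [← ENNReal.tsum_mul_left]
        refine tsum_congr fun t => ?_
        rw [ih, h.2, h.2, Finset.prod_range_succ, Function.update_self, ← mul_assoc, ← mul_assoc]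
        have hprod : ∏ i ∈ Finset.range m, ENNReal.ofReal
            (p (Function.update f (m + 1) t i) (Function.update f (m + 1) t (i + 1))) =
            ∏ i ∈ Finset.range m, ENNReal.ofReal (p (f i) (f (i + 1))) := by
          refine Finset.prod_congr rfl fun i hi => ?_
          have := Finset.mem_range.1 hi
          rw [Function.update_of_ne (by omega), Function.update_of_ne (by omega)]
        rw [hprod, Function.update_of_ne (by omega), Function.update_of_ne (by omega)]
      · intro s t hst
        refine Set.disjoint_left.2 fun ω h1 h2 => hst ?_
        have e1 := h1.1 (m + 1) le_rfl
        have e2 := h2.1 (m + 1) le_rfl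
        rw [Function.update_self] at e1 e2
        exact e1.symm.trans e2
      · exact fun t => (measurableSet_cylinder _ _).inter (measurableSet_hitAt _ _ _ _)
    · simp only [firstHit, hD, if_false, mul_zero]
      convert measure_empty (μ := μ)
      ext ω
      simp only [Set.mem_inter_iff, Set.mem_ofPred_eq, Set.mem_empty_iff_false, iff_false]
      rintro ⟨h1, h2, -⟩
      have := h2 0 (by omega)
      rw [add_zero, h1 m le_rfl] at this
      exact hD this

/-- The probability of `hitEvent`, by conditioning on the first step. -/
lemma IsRandomWalk.measure_hitEvent {p : S → S → ℝ} {x : S} {μ : TrajMeasure S}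
    (h : IsRandomWalk p x μ) {D : Set S} {y : S} (hy : y ∉ D) :
    μ (hitEvent D x y) = ∑' t, ENNReal.ofReal (p x t) * hitProb p D y t := by
  let f : S → ℕ → S := fun t i => if i = 0 then x else t
  -- Split according to the position `t` at time `1` and the time `1 + k` of the visit to `y`.
  have hset : hitEvent D x y = ⋃ tk : S × ℕ, ({ω | ∀ i ≤ 1, ω i = f tk.1 i} ∩
      {ω | (∀ i < tk.2, ω (1 + i) ∈ D) ∧ ω (1 + tk.2) = y}) := by
    ext ω
    simp only [hitEvent, Set.mem_inter_iff, Set.mem_ofPred_eq, Set.mem_iUnion, Prod.exists]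
    constructor
    · rintro ⟨h0, k, h1, h2⟩
      refine ⟨ω 1, k, fun i hi => ?_, fun i hi => ?_, ?_⟩
      · interval_cases i <;> simp [f, h0]
      · rw [add_comm]; exact h1 i hi
      · rwa [add_comm]
    · rintro ⟨t, k, h0, h1, h2⟩
      refine ⟨by simpa [f] using h0 0 (by omega), k, fun i hi => ?_, ?_⟩
      · rw [add_comm]; exact h1 i hi
      · rwa [add_comm]
  rw [hset, measure_iUnion, ENNReal.tsum_prod']
  · refine tsum_congr fun t => ?_
    unfold hitProb
    rw [← ENNReal.tsum_mul_left]
    refine tsum_congr fun k => ?_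
    rw [h.measure_cylinder_inter, h.2]
    simp [f]
  · rintro ⟨s, k⟩ ⟨t, l⟩ hst
    refine Set.disjoint_left.2 fun ω h1 h2 => hst ?_
    have e1 := h1.1 1 le_rfl
    have e2 := h2.1 1 le_rfl
    have hst' : s = t := by simpa [f] using e1.symm.trans e2
    have hkl : k = l := by
      rcases lt_trichotomy k l with hkl | hkl | hkl
      · exact absurd (h1.2.2 ▸ h2.2.1 k hkl) hy
      · exact hkl
      · exact absurd (h2.2.2 ▸ h1.2.1 l hkl) hy
    rw [hst', hkl]
  · exact fun t => (measurableSet_cylinder _ _).inter (measurableSet_hitAt _ _ _ _)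

omit [Countable S] in
/-- Events which agree on trajectories started at `x` have the same probability, since a walk
started at `x` is at `x` at time `0` almost surely. -/
lemma IsRandomWalk.measure_eq {p : S → S → ℝ} {x : S} {μ : TrajMeasure S}
    (h : IsRandomWalk p x μ) {A B : Set (ℕ → S)} (hAB : ∀ ω, ω 0 = x → (ω ∈ A ↔ ω ∈ B)) :
    μ A = μ B := by
  have : IsProbabilityMeasure μ := ⟨h.1⟩
  have h0 : ∀ᵐ ω ∂μ, ω 0 = x := by
    have h1 := h.2 0 (fun _ => x)
    simp only [nonpos_iff_eq_zero, forall_eq, if_true, Finset.range_zero, Finset.prod_empty,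
      mul_one] at h1
    exact (prob_compl_eq_zero_iff (measurableSet_coord 0 {x})).2 h1
  refine measure_congr ?_
  filter_upwards [h0] with ω hω
  exact propext (hAB ω hω)

end HittingProbabilities

/-! ### Escape events in terms of hitting times -/

section HittingTimes

variable {S : Type}

lemma hitTime_lt_iff {A : Set S} {ω : ℕ → S} {b : ℕ∞} :
    hitTime A ω < b ↔ ∃ k : ℕ, ω k ∈ A ∧ (k : ℕ∞) < b := by
  unfold hitTime
  rw [sInf_lt_iff]
  constructor
  · rintro ⟨_, ⟨k, rfl, hk⟩, h⟩; exact ⟨k, hk, h⟩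
  · rintro ⟨k, hk, h⟩; exact ⟨_, ⟨k, rfl, hk⟩, h⟩

lemma lt_hitTime_iff {A : Set S} {ω : ℕ → S} {k : ℕ} :
    (k : ℕ∞) < hitTime A ω ↔ ∀ j ≤ k, ω j ∉ A := by
  constructor
  · intro h j hj hA
    exact absurd (h.trans_le (sInf_le ⟨j, rfl, hA⟩)) (by simpa using hj)
  · intro h
    refine lt_of_lt_of_le (b := ((k + 1 : ℕ) : ℕ∞)) (by exact_mod_cast Nat.lt_succ_self k)
      (le_sInf ?_)
    rintro _ ⟨j, rfl, hj⟩
    have : k < j := by by_contra hc; exact h j (by omega) hj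
    exact_mod_cast this

lemma lt_hitTime1_iff {A : Set S} {ω : ℕ → S} {k : ℕ} :
    (k : ℕ∞) < hitTime1 A ω ↔ ∀ j, 1 ≤ j → j ≤ k → ω j ∉ A := by
  constructor
  · intro h j hj1 hj hA
    exact absurd (h.trans_le (sInf_le ⟨j, hj1, rfl, hA⟩)) (by simpa using hj)
  · intro h
    refine lt_of_lt_of_le (b := ((k + 1 : ℕ) : ℕ∞)) (by exact_mod_cast Nat.lt_succ_self k)
      (le_sInf ?_)
    rintro _ ⟨j, hj1, rfl, hj⟩
    have : k < j := by by_contra hc; exact h j hj1 (by omega) hj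
    exact_mod_cast this

/-- On trajectories started at `x`, the event `τ_y < τ_x⁺` is `hitEvent {x, y}ᶜ x y`. -/
lemma mem_escape_iff {x y : S} (hxy : x ≠ y) {ω : ℕ → S} (h0 : ω 0 = x) :
    hitTime {y} ω < hitTime1 {x} ω ↔ ω ∈ hitEvent {x, y}ᶜ x y := by
  simp only [hitTime_lt_iff, lt_hitTime1_iff, hitEvent, Set.mem_ofPred_eq,
    Set.mem_singleton_iff, h0, true_and]
  constructor
  · rintro ⟨k, hk, hx⟩
    -- The first visit to `y` is the one that witnesses the event.
    have hex : ∃ k, ω k = y := ⟨k, hk⟩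
    have hle := Nat.find_le (h := hex) hk
    obtain ⟨l, hl⟩ : ∃ l, Nat.find hex = l + 1 := by
      refine Nat.exists_eq_succ_of_ne_zero fun h => hxy ?_
      rw [← h0, ← h]; exact Nat.find_spec hex
    refine ⟨l, fun i hi => ?_, hl ▸ Nat.find_spec hex⟩
    simp only [Set.mem_compl_iff, Set.mem_insert_iff, Set.mem_singleton_iff, not_or]
    exact ⟨hx (i + 1) (by omega) (by omega), Nat.find_min hex (by omega)⟩
  · rintro ⟨k, hk, hy⟩
    refine ⟨k + 1, hy, fun j hj1 hj => ?_⟩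
    rcases hj.lt_or_eq with h | rfl
    · obtain ⟨i, rfl⟩ : ∃ i, j = i + 1 := ⟨j - 1, by omega⟩
      have := hk i (by omega)
      simp only [Set.mem_compl_iff, Set.mem_insert_iff, not_or] at this
      exact this.1
    · rw [hy]; exact hxy.symm

/-- On trajectories started at `x ∉ B`, the event `τ_B < τ_y < τ_x⁺` consists of the trajectories
which escape from `x` to `y`, but not within the complement of `B`. -/
lemma mem_escape_through_iff {x y : S} (hxy : x ≠ y) {B : Set S} (hx : x ∉ B)
    {ω : ℕ → S} (h0 : ω 0 = x) :
    (hitTime B ω < hitTime {y} ω ∧ hitTime {y} ω < hitTime1 {x} ω) ↔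
      ω ∈ hitEvent {x, y}ᶜ x y \ hitEvent ({x, y}ᶜ \ B) x y := by
  rw [mem_escape_iff hxy h0, and_comm, Set.mem_sdiff]
  refine and_congr_right fun h => ?_
  rw [hitTime_lt_iff]
  simp only [lt_hitTime_iff, hitEvent, Set.mem_ofPred_eq, not_and, h0, true_implies, not_exists,
    Set.mem_singleton_iff]
  obtain ⟨-, k, hk, hky⟩ := h
  constructor
  · rintro ⟨j, hjB, hj⟩ l hl hly
    have hjl : j < l + 1 := by by_contra hc; exact hj (l + 1) (by omega) hly
    rcases j with _ | j
    · exact hx (h0 ▸ hjB)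
    · exact (hl j (by omega)).2 hjB
  · intro h
    by_contra hc
    refine h k (fun i hi => ⟨hk i hi, fun hB => hc ⟨i + 1, hB, fun j hj => ?_⟩⟩) hky
    rcases j with _ | j
    · rw [h0]; exact hxy
    · have := hk j (by omega)
      simp only [Set.mem_compl_iff, Set.mem_insert_iff, Set.mem_singleton_iff, not_or] at this
      exact this.2

end HittingTimes

/-! ### The induced and the extended walk on a finite vertex set -/

namespace WeightedGraph

section ExtendedGraph

variable {V : Type} (G : WeightedGraph V) (A : Finset V)

/-- The total weight of the edges from `v` to the complement of `A`, i.e. `c̄(v, v̄)`. -/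
noncomputable def outW (v : V) : ℝ := ∑' z, (if z ∈ A then 0 else G.c v z)

lemma summable_out (v : V) : Summable fun z => if z ∈ A then 0 else G.c v z :=
  Summable.of_nonneg_of_le (fun z => by split_ifs <;> simp [G.nonneg])
    (fun z => by split_ifs <;> simp [G.nonneg]) (G.row_summable v)

lemma hasSum_in (v : V) : HasSum (fun z => if z ∈ A then G.c v z else 0) (G.degIn A v) := by
  have h := hasSum_sum_of_ne_finset_zero (f := fun z => if z ∈ A then G.c v z else 0) (s := A)
    (L := SummationFilter.unconditional V) (fun z hz => by simp [hz])
  have h2 : ∑ z ∈ A, (if z ∈ A then G.c v z else 0) = G.degIn A v :=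
    Finset.sum_congr rfl fun z hz => by simp [hz]
  rwa [h2] at h

lemma outW_nonneg (v : V) : 0 ≤ G.outW A v :=
  tsum_nonneg fun z => by split_ifs <;> simp [G.nonneg]

lemma degIn_nonneg (v : V) : 0 ≤ G.degIn A v :=
  Finset.sum_nonneg fun _ _ => G.nonneg _ _

lemma deg_eq (v : V) : G.deg v = G.degIn A v + G.outW A v := by
  rw [← (G.hasSum_in A v).tsum_eq, outW,
    ← (G.hasSum_in A v).summable.tsum_add (G.summable_out A v)]
  exact tsum_congr fun z => by split_ifs <;> simp

lemma deg_nonneg (v : V) : 0 ≤ G.deg v := tsum_nonneg fun _ => G.nonneg _ _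

lemma c_eq_zero_of_degIn {v t : V} (h : G.degIn A v = 0) (ht : t ∈ A) : G.c v t = 0 :=
  (Finset.sum_eq_zero_iff_of_nonneg fun _ _ => G.nonneg _ _).1 h t ht

variable {A} {v : V}

lemma extDeg_inl (hv : v ∈ A) : G.extDeg A (Sum.inl v) = G.deg v := by
  have h1 : HasSum (G.extW A (Sum.inl v) ∘ Sum.inl) (G.degIn A v) := by
    convert G.hasSum_in A v using 2 with z
    simp [extW, hv]
  have h2 : HasSum (G.extW A (Sum.inl v) ∘ Sum.inr) (G.outW A v) := by
    convert hasSum_ite_eq v (G.outW A v) using 2 with w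
    simp [extW, hv, outW, eq_comm]
  rw [extDeg, (h1.sum h2).tsum_eq, ← G.deg_eq]

lemma extDeg_inr (hv : v ∈ A) : G.extDeg A (Sum.inr v) = G.outW A v := by
  have h1 : HasSum (G.extW A (Sum.inr v) ∘ Sum.inl) (G.outW A v) := by
    convert hasSum_ite_eq v (G.outW A v) using 2 with w
    by_cases h : w = v
    · subst h; simp [extW, hv, outW]
    · simp [extW, h]
  have h2 : HasSum (G.extW A (Sum.inr v) ∘ Sum.inr) 0 := by
    convert hasSum_zero using 2 with w
    simp [extW]
  rw [extDeg, (h1.sum h2).tsum_eq, add_zero]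

lemma extTrans_inl_inl (hv : v ∈ A) (t : V) :
    G.extTrans A (Sum.inl v) (Sum.inl t) = G.degIn A v / G.deg v * G.transIn A v t := by
  rw [extTrans, G.extDeg_inl hv, transIn, restrictW]
  by_cases ht : t ∈ A
  · by_cases h0 : G.degIn A v = 0
    · simp [extW, hv, ht, G.c_eq_zero_of_degIn A h0 ht]
    · simp only [extW, hv, ht, and_self, if_true]
      field_simp
  · simp [extW, ht]

lemma extTrans_inl_inl_of_mem (hv : v ∈ A) {t : V} (ht : t ∈ A) :
    G.extTrans A (Sum.inl v) (Sum.inl t) = G.trans v t := by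
  simp [extTrans, G.extDeg_inl hv, trans, extW, hv, ht]

lemma transIn_of_notMem (hv : v ∉ A) (t : V) : G.transIn A v t = 0 := by
  simp [transIn, restrictW, hv]

lemma extTrans_of_notMem (hv : v ∉ A) (s : V ⊕ V) : G.extTrans A (Sum.inl v) s = 0 := by
  cases s <;> simp [extTrans, extW, hv]

/-- One step of the extended walk from a vertex of `A`. -/
lemma tsum_extTrans_inl (hv : v ∈ A) (g : V ⊕ V → ℝ≥0∞) :
    ∑' s, ENNReal.ofReal (G.extTrans A (Sum.inl v) s) * g s =
      ∑' t, ENNReal.ofReal (G.extTrans A (Sum.inl v) (Sum.inl t)) * g (Sum.inl t) +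
        ENNReal.ofReal (G.outW A v / G.deg v) * g (Sum.inr v) := by
  rw [Summable.tsum_sum ENNReal.summable ENNReal.summable]
  congr 1
  rw [tsum_eq_single v]
  · simp [extTrans, G.extDeg_inl hv, extW, hv, outW]
  · intro w hw
    simp [extTrans, extW, hw.symm]

/-- One step of the extended walk from a vertex of `A` in terms of the induced walk. -/
lemma tsum_extTrans_inl' (hv : v ∈ A) (g : V ⊕ V → ℝ≥0∞) :
    ∑' s, ENNReal.ofReal (G.extTrans A (Sum.inl v) s) * g s =
      ENNReal.ofReal (G.degIn A v / G.deg v) *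
          ∑' t, ENNReal.ofReal (G.transIn A v t) * g (Sum.inl t) +
        ENNReal.ofReal (G.outW A v / G.deg v) * g (Sum.inr v) := by
  rw [G.tsum_extTrans_inl hv, ← ENNReal.tsum_mul_left]
  congr 1
  refine tsum_congr fun t => ?_
  rw [G.extTrans_inl_inl hv, ENNReal.ofReal_mul (div_nonneg (G.degIn_nonneg A v) (G.deg_nonneg v)),
    mul_assoc]

/-- The extended walk returns from `v̄` to `v`. -/
lemma tsum_extTrans_inr (v : V) (g : V ⊕ V → ℝ≥0∞) :
    ∑' s, ENNReal.ofReal (G.extTrans A (Sum.inr v) s) * g s =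
      if v ∈ A ∧ 0 < G.outW A v then g (Sum.inl v) else 0 := by
  rw [tsum_eq_single (Sum.inl v)]
  · by_cases hv : v ∈ A
    · rw [extTrans, G.extDeg_inr hv]
      simp only [extW, hv, true_and, and_self, if_true]
      change ENNReal.ofReal (G.outW A v / G.outW A v) * _ = _
      by_cases h : 0 < G.outW A v
      · simp [h, h.ne']
      -- If `v̄` is isolated, then its transition probabilities are `0 / 0 = 0`.
      · simp [le_antisymm (not_lt.1 h) (G.outW_nonneg A v)]
    · simp [extTrans, extW, hv]
  · rintro (w | w) hw
    · have : w ≠ v := fun h => hw (h ▸ rfl)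
      simp [extTrans, extW, this]
    · simp [extTrans, extW]

lemma tsum_transIn_le_one (v : V) : ∑' t, ENNReal.ofReal (G.transIn A v t) ≤ 1 := by
  rw [tsum_eq_sum (s := A) (fun t ht => by simp [transIn, restrictW, ht]),
    ← ENNReal.ofReal_sum_of_nonneg]
  · refine ENNReal.ofReal_le_one.2 ?_
    by_cases hv : v ∈ A
    · have : ∑ t ∈ A, G.transIn A v t = G.degIn A v / G.degIn A v := by
        unfold transIn
        rw [← Finset.sum_div]
        congr 1
        exact Finset.sum_congr rfl fun t ht => by simp [restrictW, hv, ht]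
      rw [this]
      exact div_self_le_one _
    · simp [transIn, restrictW, hv]
  · intro t _
    refine div_nonneg ?_ (G.degIn_nonneg A v)
    unfold restrictW
    split_ifs <;> simp [G.nonneg]

lemma hitProb_transIn_le_one {x y : V} (v : V) :
    hitProb (G.transIn A) {x, y}ᶜ y v ≤ 1 :=
  hitProb_le (g := fun _ => 1) le_rfl (by simp)
    (fun s _ => by simpa using G.tsum_transIn_le_one s) v

/-- Upper bound in `hitProb_extTrans`: extending the hitting probability of the induced walk to
the boundary copies by `v̄ ↦ v` gives a supersolution for the extended walk. -/
lemma hitProb_extTrans_le {x y : V} (v : V) :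
    hitProb (G.extTrans A) {Sum.inl x, Sum.inl y}ᶜ (Sum.inl y) (Sum.inl v) ≤
      hitProb (G.transIn A) {x, y}ᶜ y v := by
  refine hitProb_le (g := Sum.elim (hitProb (G.transIn A) {x, y}ᶜ y)
    (hitProb (G.transIn A) {x, y}ᶜ y)) ?_ (by simp) ?_ (Sum.inl v)
  · simp only [Sum.elim_inl]
    rw [hitProb_eq]
    simp
  · rintro (w | w) hw
    · by_cases hwA : w ∈ A
      · simp only [Set.mem_compl_iff, Set.mem_insert_iff, Sum.inl.injEq, Set.mem_singleton_iff,
          not_or] at hw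
        have hM := hitProb_of_mem (p := G.transIn A) (D := {x, y}ᶜ) (y := y) (s := w)
          (by simp [hw]) hw.2
        rw [G.tsum_extTrans_inl' hwA]
        simp only [Sum.elim_inl, Sum.elim_inr]
        rw [← hM, ← add_mul, ← ENNReal.ofReal_add (div_nonneg (G.degIn_nonneg A w) (G.deg_nonneg w))
          (div_nonneg (G.outW_nonneg A w) (G.deg_nonneg w)), ← add_div, ← G.deg_eq]
        exact mul_le_of_le_one_left' (ENNReal.ofReal_le_one.2 (div_self_le_one _))
      · simp [G.extTrans_of_notMem hwA]
    · rw [G.tsum_extTrans_inr]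
      split_ifs <;> simp

/-- Erasing the excursions `(v, v̄, v)` does not change hitting probabilities. -/
lemma hitProb_extTrans {x y : V} (v : V) :
    hitProb (G.extTrans A) {Sum.inl x, Sum.inl y}ᶜ (Sum.inl y) (Sum.inl v) =
      hitProb (G.transIn A) {x, y}ᶜ y v := by
  refine le_antisymm (G.hitProb_extTrans_le v) ?_
  refine hitProb_le (g := fun v => hitProb (G.extTrans A) {Sum.inl x, Sum.inl y}ᶜ (Sum.inl y)
    (Sum.inl v)) ?_ (by simp) ?_ v
  · rw [hitProb_eq]
    simp
  · intro w hw
    simp only [Set.mem_compl_iff, Set.mem_insert_iff, Set.mem_singleton_iff, not_or] at hw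
    by_cases hwA : w ∈ A
    swap
    · simp [G.transIn_of_notMem hwA]
    by_cases h0 : G.degIn A w = 0
    · simp [transIn, h0]
    set g := fun s => hitProb (G.extTrans A) {Sum.inl x, Sum.inl y}ᶜ (Sum.inl y) s with hg
    change ∑' t, ENNReal.ofReal (G.transIn A w t) * g (Sum.inl t) ≤ g (Sum.inl w)
    have hpos : 0 < G.degIn A w := lt_of_le_of_ne (G.degIn_nonneg A w) (Ne.symm h0)
    have hdeg : 0 < G.deg w := by
      rw [G.deg_eq A]; exact add_pos_of_pos_of_nonneg hpos (G.outW_nonneg A w)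
    have hfin : g (Sum.inl w) ≠ ∞ :=
      ((G.hitProb_extTrans_le w).trans (G.hitProb_transIn_le_one w)).trans_lt
        ENNReal.one_lt_top |>.ne
    have hinr : ENNReal.ofReal (G.outW A w / G.deg w) * g (Sum.inr w) =
        ENNReal.ofReal (G.outW A w / G.deg w) * g (Sum.inl w) := by
      by_cases h : 0 < G.outW A w
      · have : g (Sum.inr w) = g (Sum.inl w) := by
          simp only [hg]
          rw [hitProb_of_mem (s := Sum.inr w) (by simp) (by simp), G.tsum_extTrans_inr]
          simp [hwA, h]
        rw [this]
      · simp [le_antisymm (not_lt.1 h) (G.outW_nonneg A w)]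
    have hstep : g (Sum.inl w) = _ :=
      hitProb_of_mem (p := G.extTrans A) (D := {Sum.inl x, Sum.inl y}ᶜ) (y := Sum.inl y)
        (s := Sum.inl w) (by simp [hw]) (by simp [hw])
    rw [G.tsum_extTrans_inl' hwA] at hstep
    change g (Sum.inl w) = ENNReal.ofReal (G.degIn A w / G.deg w) *
      ∑' t, ENNReal.ofReal (G.transIn A w t) * g (Sum.inl t) +
        ENNReal.ofReal (G.outW A w / G.deg w) * g (Sum.inr w) at hstep
    rw [hinr] at hstep
    have hsum : ENNReal.ofReal (G.degIn A w / G.deg w) * g (Sum.inl w) +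
        ENNReal.ofReal (G.outW A w / G.deg w) * g (Sum.inl w) = g (Sum.inl w) := by
      rw [← add_mul, ← ENNReal.ofReal_add (div_nonneg hpos.le hdeg.le)
        (div_nonneg (G.outW_nonneg A w) hdeg.le), ← add_div, ← G.deg_eq, div_self hdeg.ne']
      simp
    -- With `κ = (c_n)_w / c_w` and `ρ = 1 - κ`, `g = κ M + ρ g` and `g = κ g + ρ g`, where `M` is
    -- the average of `g` over a step of the induced walk; `ρ g` is finite and cancels.
    have hcancel := (ENNReal.add_left_inj (ENNReal.mul_ne_top ENNReal.ofReal_ne_top hfin)).1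
      (hstep.symm.trans hsum.symm)
    refine le_of_eq ((ENNReal.mul_right_inj ?_ ENNReal.ofReal_ne_top).1 hcancel)
    exact (ENNReal.ofReal_pos.2 (div_pos hpos hdeg)).ne'

/-- The escape probability of the extended walk is that of the induced walk times the probability
`(c_n)_x / c_x` that the first step does not lead to the boundary copy `x̄`, from where the walk
would return to `x` at once. -/
lemma escape_extTrans {x y : V} (hxy : x ≠ y) (hx : x ∈ A) :
    ∑' s, ENNReal.ofReal (G.extTrans A (Sum.inl x) s) *
        hitProb (G.extTrans A) {Sum.inl x, Sum.inl y}ᶜ (Sum.inl y) s =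
      ENNReal.ofReal (G.degIn A x / G.deg x) *
        ∑' t, ENNReal.ofReal (G.transIn A x t) * hitProb (G.transIn A) {x, y}ᶜ y t := by
  rw [G.tsum_extTrans_inl' hx, hitProb_of_mem (s := Sum.inr x) (by simp) (by simp),
    G.tsum_extTrans_inr, hitProb_of_notMem (s := Sum.inl x) (by simp) (by simp [hxy])]
  simp [G.hitProb_extTrans]

variable (A) in
lemma mem_boundaryCopies_inr (hv : v ∈ A) (h : 0 < G.outW A v) :
    Sum.inr v ∈ G.boundaryCopies A := by
  refine ⟨v, ⟨hv, ?_⟩, rfl⟩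
  by_contra hc
  push Not at hc
  refine h.ne' ?_
  unfold outW
  convert tsum_zero with z
  split_ifs with hz
  · rfl
  · exact le_antisymm (hc z hz) (G.nonneg _ _)

lemma inl_notMem_boundaryCopies : Sum.inl v ∉ G.boundaryCopies A := by
  rintro ⟨w, -, h⟩; simp at h

/-- A step to `v̄` has probability zero, or else `v̄` is one of the forbidden boundary copies. -/
lemma outW_mul_firstHit (hv : v ∈ A) (y : V) (D : Set (V ⊕ V)) (k : ℕ) :
    ENNReal.ofReal (G.outW A v / G.deg v) *
      firstHit (G.extTrans A) (D \ G.boundaryCopies A) (Sum.inl y) k (Sum.inr v) = 0 := by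
  by_cases h : 0 < G.outW A v
  · have := G.mem_boundaryCopies_inr A hv h
    cases k <;> simp [firstHit, this]
  · simp [le_antisymm (not_lt.1 h) (G.outW_nonneg A v)]

lemma firstHit_trans_of_notMem {y : V} (hy : y ∈ A) (D : Set V) (k : ℕ) {t : V} (ht : t ∉ A) :
    firstHit G.trans (D ∩ A) y k t = 0 := by
  have : t ≠ y := fun h => ht (h ▸ hy)
  cases k <;> simp [firstHit, ht, this]

/-- Until it meets the boundary copies, the extended walk is the original walk on `V`. -/
lemma firstHit_extTrans {x y : V} (hy : y ∈ A) (k : ℕ) {t : V} (ht : t ∈ A) :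
    firstHit (G.extTrans A) ({Sum.inl x, Sum.inl y}ᶜ \ G.boundaryCopies A) (Sum.inl y) k
      (Sum.inl t) = firstHit G.trans ({x, y}ᶜ ∩ A) y k t := by
  induction k generalizing t with
  | zero => simp [firstHit]
  | succ k ih =>
    have hmem : (Sum.inl t : V ⊕ V) ∈ ({Sum.inl x, Sum.inl y}ᶜ \ G.boundaryCopies A : Set (V ⊕ V))
        ↔ t ∈ ({x, y}ᶜ ∩ A : Set V) := by
      simp [ht, G.inl_notMem_boundaryCopies]
    simp only [firstHit, hmem]
    split_ifs
    · rw [G.tsum_extTrans_inl ht, G.outW_mul_firstHit ht, add_zero]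
      refine tsum_congr fun s => ?_
      by_cases hs : s ∈ A
      · rw [ih hs, G.extTrans_inl_inl_of_mem ht hs]
      · rw [G.firstHit_trans_of_notMem hy _ k hs]
        simp [extTrans, extW, hs]
    · rfl

/-- The probability that the extended walk escapes from `x` to `y` before meeting the boundary
copies is the probability that the walk on the whole graph escapes from `x` to `y` inside `A`. -/
lemma escape_inside {x y : V} (hx : x ∈ A) (hy : y ∈ A) :
    ∑' s, ENNReal.ofReal (G.extTrans A (Sum.inl x) s) *
        hitProb (G.extTrans A) ({Sum.inl x, Sum.inl y}ᶜ \ G.boundaryCopies A) (Sum.inl y) s =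
      ∑' t, ENNReal.ofReal (G.trans x t) * hitProb G.trans ({x, y}ᶜ ∩ A) y t := by
  rw [G.tsum_extTrans_inl hx]
  unfold hitProb
  simp_rw [← ENNReal.tsum_mul_left, G.outW_mul_firstHit hx, tsum_zero, add_zero]
  refine tsum_congr fun s => tsum_congr fun k => ?_
  by_cases hs : s ∈ A
  · rw [G.firstHit_extTrans hy k hs, G.extTrans_inl_inl_of_mem hx hs]
  · rw [G.firstHit_trans_of_notMem hy _ k hs]
    simp [extTrans, extW, hs]

end ExtendedGraph

/-! ### Limits along the exhaustion -/

lemma deg_pos {V : Type} (G : WeightedGraph V) (hconn : G.Connected) {x y : V} (hxy : x ≠ y) :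
    0 < G.deg x := by
  rcases (hconn x y).cases_head with h | ⟨z, hz, -⟩
  · exact absurd h hxy
  · exact (show 0 < G.c x z from hz).trans_le
      ((G.row_summable x).le_tsum z fun _ _ => G.nonneg _ _)

variable {V : Type} {G : WeightedGraph V} {Vn : ℕ → Finset V}

lemma IsExhaustion.monotone (h : G.IsExhaustion Vn) : Monotone Vn :=
  monotone_nat_of_le_succ h.1

lemma IsExhaustion.eventually_mem (h : G.IsExhaustion Vn) (v : V) : ∀ᶠ n in atTop, v ∈ Vn n := by
  obtain ⟨n, hn⟩ := h.2.1 v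
  exact eventually_atTop.2 ⟨n, fun m hm => h.monotone hm hn⟩

/-- `(c_n)_x / c_x → 1` along an exhaustion. -/
lemma IsExhaustion.tendsto_ratio (h : G.IsExhaustion Vn) {x : V} (hx : 0 < G.deg x) :
    Tendsto (fun n => ENNReal.ofReal (G.degIn (Vn n) x / G.deg x)) atTop (𝓝 1) := by
  have h1 : Tendsto (fun n => G.degIn (Vn n) x) atTop (𝓝 (G.deg x)) :=
    (G.row_summable x).hasSum.comp (tendsto_atTop_finset_of_monotone h.monotone h.2.1)
  have h2 := ENNReal.tendsto_ofReal (h1.div_const (G.deg x))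
  rwa [div_self hx.ne', ENNReal.ofReal_one] at h2

/-- The probability of escaping from `x` to `y` inside `V_n` tends to the escape probability. -/
lemma IsExhaustion.tendsto_hitEvent (h : G.IsExhaustion Vn) (μ : TrajMeasure V) (D : Set V)
    (x y : V) :
    Tendsto (fun n => μ (hitEvent (D ∩ Vn n) x y)) atTop (𝓝 (μ (hitEvent D x y))) := by
  have hU : hitEvent D x y = ⋃ n, hitEvent (D ∩ Vn n) x y := by
    ext ω
    simp only [hitEvent, Set.mem_ofPred_eq, Set.mem_iUnion]
    constructor
    · rintro ⟨h0, k, hk, hy⟩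
      obtain ⟨n, hn⟩ := ((Finset.range k).eventually_all.2
        fun i _ => h.eventually_mem (ω (i + 1))).exists
      exact ⟨n, h0, k, fun i hi => ⟨hk i hi, hn i (Finset.mem_range.2 hi)⟩, hy⟩
    · rintro ⟨n, h0, k, hk, hy⟩
      exact ⟨h0, k, fun i hi => (hk i hi).1, hy⟩
  rw [hU]
  refine tendsto_measure_iUnion_atTop fun m n hmn ω => ?_
  rintro ⟨h0, k, hk, hy⟩
  exact ⟨h0, k, fun i hi => ⟨(hk i hi).1, h.monotone hmn (hk i hi).2⟩, hy⟩

/-- The escape event of the extended walk, whose probability is the left-hand side, splits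
according to whether the walk visits the boundary copies before `y`. -/
lemma ratio_mul_escape [Countable V] {A : Finset V} {x y : V} (hxy : x ≠ y) (hx : x ∈ A)
    (hy : y ∈ A) {μ ν : TrajMeasure V} {μbar : TrajMeasure (V ⊕ V)}
    (hμ : IsRandomWalk G.trans x μ) (hν : IsRandomWalk (G.transIn A) x ν)
    (hμbar : IsRandomWalk (G.extTrans A) (Sum.inl x) μbar) :
    ENNReal.ofReal (G.degIn A x / G.deg x) * ν {ω | hitTime {y} ω < hitTime1 {x} ω} =
      μ (hitEvent ({x, y}ᶜ ∩ A) x y) +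
        μbar {ω | hitTime (G.boundaryCopies A) ω < hitTime {Sum.inl y} ω ∧
          hitTime {Sum.inl y} ω < hitTime1 {Sum.inl x} ω} := by
  have hxy' : (Sum.inl x : V ⊕ V) ≠ Sum.inl y := by simpa using hxy
  have hsub : hitEvent ({Sum.inl x, Sum.inl y}ᶜ \ G.boundaryCopies A) (Sum.inl x) (Sum.inl y) ⊆
      hitEvent {Sum.inl x, Sum.inl y}ᶜ (Sum.inl x) (Sum.inl y) := by
    rintro ω ⟨h0, k, hk, h⟩
    exact ⟨h0, k, fun i hi => (hk i hi).1, h⟩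
  have hν' : ν {ω | hitTime {y} ω < hitTime1 {x} ω} = ν (hitEvent {x, y}ᶜ x y) :=
    hν.measure_eq fun ω h0 => mem_escape_iff hxy h0
  have hμbar' : μbar {ω | hitTime (G.boundaryCopies A) ω < hitTime {Sum.inl y} ω ∧
      hitTime {Sum.inl y} ω < hitTime1 {Sum.inl x} ω} =
      μbar (hitEvent {Sum.inl x, Sum.inl y}ᶜ (Sum.inl x) (Sum.inl y) \
        hitEvent ({Sum.inl x, Sum.inl y}ᶜ \ G.boundaryCopies A) (Sum.inl x) (Sum.inl y)) :=
    hμbar.measure_eq fun ω h0 => mem_escape_through_iff hxy' G.inl_notMem_boundaryCopies h0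
  rw [hν', hμbar', hν.measure_hitEvent (by simp), hμ.measure_hitEvent (by simp), ← G.escape_extTrans hxy hx,
    ← G.escape_inside hx hy, ← hμbar.measure_hitEvent (by simp),
    ← hμbar.measure_hitEvent (by simp), add_comm]
  have := measure_sdiff_add_inter (μ := μbar)
    (hitEvent {Sum.inl x, Sum.inl y}ᶜ (Sum.inl x) (Sum.inl y))
    (measurableSet_hitEvent ({Sum.inl x, Sum.inl y}ᶜ \ G.boundaryCopies A) (Sum.inl x) (Sum.inl y))
  rw [Set.inter_eq_self_of_subset_right hsub] at this
  exact this.symm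

end WeightedGraph

/-- For an infinite, connected weighted graph `G` with finite
exhaustion `(Vₙ)` and distinct `x, y`:
`limₙ Pⁿ_x[τ_y < τ_x⁺] = P_x[τ_y < τ_x⁺]` iff `limₙ P̄ⁿ_x[τ_{Vₙ*} < τ_y < τ_x⁺] = 0`. -/
theorem finite_escape_tendsto_iff_boundary_escape_vanishes
    {V : Type} [Countable V] [Infinite V] (G : WeightedGraph V) (hconn : G.Connected)
    (P : V → TrajMeasure V) (hP : ∀ x : V, IsRandomWalk G.trans x (P x))
    (Vn : ℕ → Finset V) (hVn : G.IsExhaustion Vn)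
    (Pn : ℕ → V → TrajMeasure V)
    (hPn : ∀ n : ℕ, ∀ x ∈ Vn n, IsRandomWalk (G.transIn (Vn n)) x (Pn n x))
    (Pbar : ℕ → V → TrajMeasure (V ⊕ V))
    (hPbar : ∀ n : ℕ, ∀ x ∈ Vn n,
      IsRandomWalk (G.extTrans (Vn n)) (Sum.inl x) (Pbar n x))
    (x y : V) (hxy : x ≠ y) :
    Filter.Tendsto (fun n : ℕ => Pn n x {ω | hitTime {y} ω < hitTime1 {x} ω})
        Filter.atTop (nhds (P x {ω | hitTime {y} ω < hitTime1 {x} ω})) ↔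
      Filter.Tendsto
        (fun n : ℕ => Pbar n x
          {ω | hitTime (G.boundaryCopies (Vn n)) ω < hitTime {Sum.inl y} ω ∧
               hitTime {Sum.inl y} ω < hitTime1 {Sum.inl x} ω})
        Filter.atTop (nhds 0) := by
  have hPx : IsProbabilityMeasure (P x) := ⟨(hP x).1⟩
  have hF : P x {ω | hitTime {y} ω < hitTime1 {x} ω} = P x (hitEvent {x, y}ᶜ x y) :=
    (hP x).measure_eq fun ω h0 => mem_escape_iff hxy h0
  have hFfin : P x (hitEvent {x, y}ᶜ x y) ≠ ∞ := measure_ne_top _ _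
  have hA := hVn.tendsto_hitEvent (P x) {x, y}ᶜ x y
  have hκ := hVn.tendsto_ratio (G.deg_pos hconn hxy)
  have key : ∀ᶠ n in atTop, ENNReal.ofReal (G.degIn (Vn n) x / G.deg x) *
      Pn n x {ω | hitTime {y} ω < hitTime1 {x} ω} =
        P x (hitEvent ({x, y}ᶜ ∩ Vn n) x y) + Pbar n x
          {ω | hitTime (G.boundaryCopies (Vn n)) ω < hitTime {Sum.inl y} ω ∧
            hitTime {Sum.inl y} ω < hitTime1 {Sum.inl x} ω} := by
    filter_upwards [hVn.eventually_mem x, hVn.eventually_mem y] with n hx hy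
    exact WeightedGraph.ratio_mul_escape hxy hx hy (hP x) (hPn n x hx) (hPbar n x hx)
  rw [hF]
  constructor
  · intro h
    have h1 := ENNReal.Tendsto.sub
      (ENNReal.Tendsto.mul hκ (Or.inl one_ne_zero) h (Or.inr ENNReal.one_ne_top)) hA (Or.inr hFfin)
    rw [one_mul, tsub_self] at h1
    refine h1.congr' ?_
    filter_upwards [key] with n hn
    rw [hn, ENNReal.add_sub_cancel_left (measure_ne_top _ _)]
  · intro h
    have h1 := ENNReal.Tendsto.div (hA.add h) (Or.inr one_ne_zero) hκ (Or.inl ENNReal.one_ne_top)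
    rw [add_zero, div_one] at h1
    refine h1.congr' ?_
    filter_upwards [key, hκ.eventually_ne one_ne_zero] with n hn h0
    rw [← hn, mul_comm, ENNReal.mul_div_cancel_right h0 ENNReal.ofReal_ne_top]
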